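/- (Strict policy improvement, strictness claim of Theorem 1.) In the setting of the previous statement—finite S and A, kernel P, reward R, discount 0 ≤ γ < 1, full-support policy π_θ, V satisfying the Bellman equation for π_θ, Q(s,a) = R(s,a) + γ·∑_{s'} P(s,a)(s')·V(s'), β : S → ℝ nonnegative, π' the tilted policy π'(s)(a) ∝ π_θ(s)(a)·exp(β(s)·Q(s,a)), and W satisfying the Bellman equation for π'—if in addition there is a state s₀ with β(s₀) > 0 and with a ↦ Q(s₀,a) not constant on A, then W(s₀) > V(s₀). -/

import Mathlib

/-!
Write `D = W - V`. Two facts combine.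

* At each state `V s` is the mean of `Q s` under `πθ s`, and exponential tilting with `β s ≥ 0` can
  only raise that mean, strictly so when `β s > 0` and `Q s` is not constant. This holds because
  `exp (β * x) - exp (β * m)` and `x - m` never have opposite signs, so, for `m` the mean, the sum of
  `p a * (exp (β * q a) - exp (β * m)) * (q a - m)` is nonnegative, and its part with the constant
  factor `exp (β * m)` vanishes (`mean_le_tilted_mean`, `mean_lt_tilted_mean`).
* Subtracting the Bellman equations, `D s` is the gain in the mean of `Q s` plus `γ` times an
  average of `D`. Evaluated at a minimiser of `D`, this gives `min D ≥ γ * min D`, so `D ≥ 0`.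
  Going back to `s₀`, `D s₀` is at least the gain there, which is strictly positive.
-/

open scoped BigOperators

/-- `V` satisfies the Bellman equation for policy `π` in the MDP `(P, R, γ)`. -/
def SatisfiesBellman {S A : Type*} [Fintype S] [Fintype A]
    (P : S → A → PMF S) (R : S → A → ℝ) (γ : ℝ)
    (π : S → PMF A) (V : S → ℝ) : Prop :=
  ∀ s, V s = ∑ a, (π s a).toReal *
      (R s a + γ * ∑ s', (P s a s').toReal * V s')

lemma pmf_sum_toReal {α : Type*} [Fintype α] (p : PMF α) : ∑ a, (p a).toReal = 1 := by
  rw [← ENNReal.toReal_sum (fun a _ => p.apply_ne_top a), ← tsum_fintype (L := .unconditional α),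
    p.tsum_coe, ENNReal.toReal_one]

lemma exp_sub_mul_sub_nonneg {β : ℝ} (hβ : 0 ≤ β) (x m : ℝ) :
    0 ≤ (Real.exp (β * x) - Real.exp (β * m)) * (x - m) := by
  rcases le_total x m with h | h
  · exact mul_nonneg_of_nonpos_of_nonpos
      (sub_nonpos.2 (Real.exp_le_exp.2 (mul_le_mul_of_nonneg_left h hβ))) (sub_nonpos.2 h)
  · exact mul_nonneg
      (sub_nonneg.2 (Real.exp_le_exp.2 (mul_le_mul_of_nonneg_left h hβ))) (sub_nonneg.2 h)

lemma exp_sub_mul_sub_pos {β : ℝ} (hβ : 0 < β) {x m : ℝ} (hx : x ≠ m) :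
    0 < (Real.exp (β * x) - Real.exp (β * m)) * (x - m) := by
  rcases lt_or_gt_of_ne hx with h | h
  · exact mul_pos_of_neg_of_neg
      (sub_neg.2 (Real.exp_lt_exp.2 (mul_lt_mul_of_pos_left h hβ))) (sub_neg.2 h)
  · exact mul_pos
      (sub_pos.2 (Real.exp_lt_exp.2 (mul_lt_mul_of_pos_left h hβ))) (sub_pos.2 h)

/-- The unnormalised gain from tilting, as a sum of terms that are nonnegative when `β ≥ 0`. -/
lemma tilted_sum_sub {A : Type*} [Fintype A] (p q : A → ℝ) (β : ℝ) (hp1 : ∑ a, p a = 1)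
    {m : ℝ} (hm : m = ∑ a, p a * q a) :
    (∑ a, p a * Real.exp (β * q a) * q a) - m * ∑ a, p a * Real.exp (β * q a) =
      ∑ a, p a * ((Real.exp (β * q a) - Real.exp (β * m)) * (q a - m)) := by
  have h : ∀ a, p a * ((Real.exp (β * q a) - Real.exp (β * m)) * (q a - m)) =
      p a * Real.exp (β * q a) * q a - m * (p a * Real.exp (β * q a)) -
        (Real.exp (β * m) * (p a * q a) - Real.exp (β * m) * m * p a) := fun a => by ring
  simp only [h, Finset.sum_sub_distrib, ← Finset.mul_sum, hp1, ← hm]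
  ring

lemma tilted_mean_eq_div {A : Type*} [Fintype A] (p q : A → ℝ) (β : ℝ) :
    ∑ a, p a * Real.exp (β * q a) / (∑ b, p b * Real.exp (β * q b)) * q a =
      (∑ a, p a * Real.exp (β * q a) * q a) / ∑ b, p b * Real.exp (β * q b) := by
  rw [Finset.sum_div]
  exact Finset.sum_congr rfl fun a _ => by ring

lemma mean_le_tilted_mean {A : Type*} [Fintype A] [Nonempty A] (p q : A → ℝ) {β : ℝ}
    (hp : ∀ a, 0 < p a) (hp1 : ∑ a, p a = 1) (hβ : 0 ≤ β) :
    ∑ a, p a * q a ≤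
      ∑ a, p a * Real.exp (β * q a) / (∑ b, p b * Real.exp (β * q b)) * q a := by
  have hZ : 0 < ∑ b, p b * Real.exp (β * q b) :=
    Finset.sum_pos (fun a _ => mul_pos (hp a) (Real.exp_pos _)) Finset.univ_nonempty
  rw [tilted_mean_eq_div, le_div_iff₀ hZ, ← sub_nonneg, tilted_sum_sub p q β hp1 rfl]
  exact Finset.sum_nonneg fun a _ => mul_nonneg (hp a).le (exp_sub_mul_sub_nonneg hβ _ _)

lemma mean_lt_tilted_mean {A : Type*} [Fintype A] [Nonempty A] (p q : A → ℝ) {β : ℝ}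
    (hp : ∀ a, 0 < p a) (hp1 : ∑ a, p a = 1) (hβ : 0 < β) (hq : ∃ a b, q a ≠ q b) :
    ∑ a, p a * q a <
      ∑ a, p a * Real.exp (β * q a) / (∑ b, p b * Real.exp (β * q b)) * q a := by
  have hZ : 0 < ∑ b, p b * Real.exp (β * q b) :=
    Finset.sum_pos (fun a _ => mul_pos (hp a) (Real.exp_pos _)) Finset.univ_nonempty
  rw [tilted_mean_eq_div, lt_div_iff₀ hZ, ← sub_pos, tilted_sum_sub p q β hp1 rfl]
  -- A nonconstant `q` differs from its mean somewhere.
  obtain ⟨c, hc⟩ : ∃ c, q c ≠ ∑ a, p a * q a := by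
    obtain ⟨a, b, hab⟩ := hq
    by_contra! h
    exact hab ((h a).trans (h b).symm)
  exact Finset.sum_pos'
    (fun a _ => mul_nonneg (hp a).le (exp_sub_mul_sub_nonneg hβ.le _ _))
    ⟨c, Finset.mem_univ c, mul_pos (hp c) (exp_sub_mul_sub_pos hβ hc)⟩

/-- Strict policy improvement (strictness claim of Theorem 1): in the setting
of the regularized tilted policy, if at some state `s₀` the inverse
temperature is positive and the Q-values are not constant in the action, then
the value of the tilted policy is strictly larger than `V` at `s₀`. -/
theorem tilted_policy_strict_improvement {S A : Type*}
    [Fintype S] [Fintype A] [Nonempty S] [Nonempty A]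
    (P : S → A → PMF S) (R : S → A → ℝ) (γ : ℝ)
    (hγ0 : 0 ≤ γ) (hγ1 : γ < 1)
    (πθ : S → PMF A) (hsupp : ∀ s a, 0 < (πθ s a).toReal)
    (V : S → ℝ) (hV : SatisfiesBellman P R γ πθ V)
    (Q : S → A → ℝ)
    (hQ : ∀ s a, Q s a = R s a + γ * ∑ s', (P s a s').toReal * V s')
    (β : S → ℝ) (hβ : ∀ s, 0 ≤ β s)
    (π' : S → PMF A)
    (hπ' : ∀ s a, (π' s a).toReal =
      (πθ s a).toReal * Real.exp (β s * Q s a) /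
        ∑ b, (πθ s b).toReal * Real.exp (β s * Q s b))
    (W : S → ℝ) (hW : SatisfiesBellman P R γ π' W)
    (s₀ : S) (hβ₀ : 0 < β s₀) (hQ₀ : ∃ a b, Q s₀ a ≠ Q s₀ b) :
    W s₀ > V s₀ := by
  have hVQ : ∀ s, V s = ∑ a, (πθ s a).toReal * Q s a := fun s => by
    rw [hV s]
    exact Finset.sum_congr rfl fun a _ => by rw [hQ]
  have hgain : ∀ s, V s ≤ ∑ a, (π' s a).toReal * Q s a := fun s => by
    rw [hVQ s]
    simp only [hπ' s]
    exact mean_le_tilted_mean _ (Q s) (hsupp s) (pmf_sum_toReal _) (hβ s)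
  have hgain₀ : V s₀ < ∑ a, (π' s₀ a).toReal * Q s₀ a := by
    rw [hVQ s₀]
    simp only [hπ' s₀]
    exact mean_lt_tilted_mean _ (Q s₀) (hsupp s₀) (pmf_sum_toReal _) hβ₀ hQ₀
  have hWQ : ∀ s, W s = (∑ a, (π' s a).toReal * Q s a) +
      γ * ∑ a, (π' s a).toReal * ∑ s', (P s a s').toReal * (W s' - V s') := fun s => by
    rw [hW s, Finset.mul_sum, ← Finset.sum_add_distrib]
    refine Finset.sum_congr rfl fun a _ => ?_
    simp only [hQ, mul_sub, Finset.sum_sub_distrib]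
    ring
  -- Averages of `W - V` over actions and successor states inherit any lower bound on `W - V`.
  have havg : ∀ d : ℝ, (∀ s, d ≤ W s - V s) → ∀ s,
      d ≤ ∑ a, (π' s a).toReal * ∑ s', (P s a s').toReal * (W s' - V s') := by
    intro d hd s
    calc d = ∑ a, (π' s a).toReal * ∑ s', (P s a s').toReal * d := by
          simp only [← Finset.sum_mul, pmf_sum_toReal, one_mul]
      _ ≤ _ := by
          gcongr with a _ s' _
          exact hd s'
  obtain ⟨t, ht⟩ := Finite.exists_min fun s => W s - V s
  have hnonneg : 0 ≤ W t - V t := by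
    have h := mul_le_mul_of_nonneg_left (havg _ ht t) hγ0
    have h1 := hWQ t
    have h2 := hgain t
    have h3 : 0 ≤ (1 - γ) * (W t - V t) := by linarith
    exact nonneg_of_mul_nonneg_right h3 (sub_pos.2 hγ1)
  have h := mul_nonneg hγ0 (havg 0 (fun s => hnonneg.trans (ht s)) s₀)
  have h1 := hWQ s₀
  linarith
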